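/- arXiv:1805.06854 — 5 statements merged into one kernel-verified Lean document; each statement's English description precedes it below -/
import Mathlib

section
/- Let N ≥ 2 and R a ring. If f, g : (C,d) → (C',d') are homotopic morphisms of N-complexes of R-modules, then for every 1 ≤ s ≤ N−1 and every n ∈ ℤ the induced maps {}_sH_n(f) and {}_sH_n(g) on homology are equal. -/
/-! Statement 3: homotopic morphisms of `N`-complexes induce the same map on the homology
`ₛH_l` for every `1 ≤ s ≤ N-1` and `l ∈ ℤ`; i.e. for every `s`-cycle `x` of degree `l`,
`f x - g x` is an `s`-boundary. -/

/-! An `N`-complex of `R`-modules is encoded as a module `V` with an internal `ℤ`-grading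
`gr` (via `DirectSum.IsInternal`) and an `R`-linear map `d : V → V` of degree `-1` such that
`d ^ N = 0`.  For `1 ≤ s ≤ N-1` the homology `ₛH_l` is `(ker d^s ∩ C_l) / d^{N-s}(C_{l+N-s})`. -/

section
variable {R V : Type} [Ring R] [AddCommGroup V] [Module R V]

/-- The `s`-cycles of an `N`-complex in degree `l`: `ker(d^s) ∩ C_l`. -/
def cyc (d : V →ₗ[R] V) (gr : ℤ → Submodule R V) (s : ℕ) (l : ℤ) : Submodule R V :=
  LinearMap.ker (d ^ s) ⊓ gr l

/-- The `s`-boundaries of an `N`-complex in degree `l`: `d^{N-s}(C_{l+N-s})`. -/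
def bdry (N : ℕ) (d : V →ₗ[R] V) (gr : ℤ → Submodule R V) (s : ℕ) (l : ℤ) : Submodule R V :=
  (gr (l + ((N - s : ℕ) : ℤ))).map (d ^ (N - s))

end

/-! The sum `σ_N = ∑_{i<N} d'^{N-1-i} h d^i` splits as
`σ_N = d'^{N-s} σ_s + σ_{N-s} d^s`. On an `s`-cycle the second summand vanishes, so
`f x - g x = d'^{N-s} (σ_s x)`, and `σ_s` has degree `(N-1) - (s-1) = N-s`. -/

section Degree

variable {R U V W : Type*} [Semiring R] [AddCommMonoid U] [Module R U]
  [AddCommMonoid V] [Module R V] [AddCommMonoid W] [Module R W]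
  {grU : ℤ → Submodule R U} {gr : ℤ → Submodule R V} {gr' : ℤ → Submodule R W}

/-- A linear map has degree `k` if it raises degrees by `k`. The families of submodules need not
be direct sum decompositions, so a map may have several degrees. -/
def HasDegree (gr : ℤ → Submodule R V) (gr' : ℤ → Submodule R W) (f : V →ₗ[R] W) (k : ℤ) : Prop :=
  ∀ m : ℤ, ∀ x ∈ gr m, f x ∈ gr' (m + k)

namespace HasDegree

theorem comp {g : V →ₗ[R] W} {f : U →ₗ[R] V} {j k : ℤ}
    (hg : HasDegree gr gr' g k) (hf : HasDegree grU gr f j) :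
    HasDegree grU gr' (g ∘ₗ f) (j + k) := fun m x hx => by
  rw [← add_assoc]
  exact hg _ _ (hf m x hx)

theorem pow {d : V →ₗ[R] V} {k : ℤ} (hd : HasDegree gr gr d k) (i : ℕ) :
    HasDegree gr gr (d ^ i) (i * k) := by
  induction i with
  | zero => simp [HasDegree]
  | succ i ih =>
    rw [pow_succ', Nat.cast_succ, add_one_mul]
    exact hd.comp ih

theorem sum {ι : Type*} {t : Finset ι} {f : ι → V →ₗ[R] W} {k : ℤ}
    (hf : ∀ i ∈ t, HasDegree gr gr' (f i) k) : HasDegree gr gr' (∑ i ∈ t, f i) k := fun m x hx => by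
  rw [LinearMap.sum_apply]
  exact Submodule.sum_mem _ fun i hi => hf i hi m x hx

end HasDegree

end Degree

section Homotopy

variable {R V W : Type*} [Semiring R] [AddCommMonoid V] [Module R V]

section HomotopySum

variable [AddCommMonoid W] [Module R W]

/-- The sum `∑_{i<n} d'^{n-1-i} h d^i`; for `n = N` it is the difference of two morphisms of
`N`-complexes related by the homotopy `h`. -/
def homotopySum (d : V →ₗ[R] V) (d' : W →ₗ[R] W) (h : V →ₗ[R] W) (n : ℕ) : V →ₗ[R] W :=
  ∑ i ∈ Finset.range n, (d' ^ (n - 1 - i)) ∘ₗ h ∘ₗ (d ^ i)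

theorem homotopySum_add (d : V →ₗ[R] V) (d' : W →ₗ[R] W) (h : V →ₗ[R] W) (s t : ℕ) :
    homotopySum d d' h (s + t) =
      (d' ^ t) ∘ₗ homotopySum d d' h s + homotopySum d d' h t ∘ₗ (d ^ s) := by
  ext x
  simp only [homotopySum, Finset.sum_range_add, LinearMap.add_apply, LinearMap.comp_apply,
    LinearMap.sum_apply, map_sum]
  congr 1 <;> refine Finset.sum_congr rfl fun i hi => ?_
  · have hi : i < s := Finset.mem_range.mp hi
    rw [show s + t - 1 - i = t + (s - 1 - i) by omega, pow_add, Module.End.mul_apply]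
  · rw [show s + t - 1 - (s + i) = t - 1 - i by omega, add_comm s i, pow_add, Module.End.mul_apply]

theorem homotopySum_apply_of_pow_apply_eq_zero (d : V →ₗ[R] V) (d' : W →ₗ[R] W) (h : V →ₗ[R] W)
    {s n : ℕ} (hsn : s ≤ n) {x : V} (hx : (d ^ s) x = 0) :
    homotopySum d d' h n x = (d' ^ (n - s)) (homotopySum d d' h s x) := by
  obtain ⟨t, rfl⟩ := Nat.exists_eq_add_of_le hsn
  simp [homotopySum_add, hx]

theorem HasDegree.homotopySum {gr : ℤ → Submodule R V} {gr' : ℤ → Submodule R W}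
    {d : V →ₗ[R] V} {d' : W →ₗ[R] W} {h : V →ₗ[R] W} {j k : ℤ}
    (hd : HasDegree gr gr d j) (hd' : HasDegree gr' gr' d' j) (hh : HasDegree gr gr' h k) (n : ℕ) :
    HasDegree gr gr' (homotopySum d d' h n) (k + (n - 1) * j) := by
  refine HasDegree.sum fun i hi => ?_
  have hi : i < n := Finset.mem_range.mp hi
  have hdegree : k + ((n : ℤ) - 1) * j = i * j + k + (n - 1 - i : ℕ) * j := by
    rw [show ((n - 1 - i : ℕ) : ℤ) = n - 1 - i by omega]
    ring
  rw [hdegree]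
  exact (hd'.pow _).comp (hh.comp (hd.pow i))

end HomotopySum

theorem stmt_3_general [AddCommGroup W] [Module R W]
    {gr : ℤ → Submodule R V} {gr' : ℤ → Submodule R W} {d : V →ₗ[R] V} {d' : W →ₗ[R] W}
    (hd : HasDegree gr gr d (-1)) (hd' : HasDegree gr' gr' d' (-1))
    {N : ℕ} {f g h : V →ₗ[R] W} (hh : HasDegree gr gr' h (N - 1))
    (hfg : f - g = homotopySum d d' h N)
    {s : ℕ} (hs : s ≤ N) {l : ℤ} {x : V} (hx : x ∈ LinearMap.ker (d ^ s) ⊓ gr l) :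
    f x - g x ∈ (gr' (l + ((N - s : ℕ) : ℤ))).map (d' ^ (N - s)) := by
  obtain ⟨hcycle, hxl⟩ := hx
  refine ⟨homotopySum d d' h s x, ?_, ?_⟩
  · have hdegree : ((N - s : ℕ) : ℤ) = N - 1 + (s - 1) * (-1) := by
      rw [Nat.cast_sub hs]
      ring
    rw [hdegree]
    exact hd.homotopySum hd' hh s l x hxl
  · rw [← homotopySum_apply_of_pow_apply_eq_zero d d' h hs (LinearMap.mem_ker.mp hcycle), ← hfg,
      LinearMap.sub_apply]

end Homotopy

theorem stmt_3 (N : ℕ) (hN : 2 ≤ N) (R V W : Type) [Ring R]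
    [AddCommGroup V] [Module R V] [AddCommGroup W] [Module R W]
    -- the `N`-complex `C`:
    (d : V →ₗ[R] V) (gr : ℤ → Submodule R V)
    (hgr : DirectSum.IsInternal gr) (hdeg : ∀ m : ℤ, ∀ x ∈ gr m, d x ∈ gr (m - 1))
    (hdN : d ^ N = 0)
    -- the `N`-complex `C'`:
    (d' : W →ₗ[R] W) (gr' : ℤ → Submodule R W)
    (hgr' : DirectSum.IsInternal gr') (hdeg' : ∀ m : ℤ, ∀ x ∈ gr' m, d' x ∈ gr' (m - 1))
    (hdN' : d' ^ N = 0)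
    -- morphisms `f, g : C → C'`:
    (f g : V →ₗ[R] W)
    (hfil : d' ∘ₗ f = f ∘ₗ d) (hgil : d' ∘ₗ g = g ∘ₗ d)
    (hfdeg : ∀ m : ℤ, ∀ x ∈ gr m, f x ∈ gr' m) (hgdeg : ∀ m : ℤ, ∀ x ∈ gr m, g x ∈ gr' m)
    -- a homotopy `h` from `f` to `g`:
    (h : V →ₗ[R] W) (hhdeg : ∀ m : ℤ, ∀ x ∈ gr m, h x ∈ gr' (m + N - 1))
    (hhom : f - g = ∑ i ∈ Finset.range N, (d' ^ (N - 1 - i)) ∘ₗ h ∘ₗ (d ^ i))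
    (s : ℕ) (hs1 : 1 ≤ s) (hs2 : s ≤ N - 1) (l : ℤ) :
    ∀ x ∈ cyc d gr s l, f x - g x ∈ bdry N d' gr' s l := by
  have hh : HasDegree gr gr' h (N - 1) := fun m x hx => add_sub_assoc m (N : ℤ) 1 ▸ hhdeg m x hx
  exact fun x hx => stmt_3_general hdeg hdeg' hh hhom (by omega) hx
end

section
/- Let N ≥ 2 and R a ring. An N-complex C of R-modules is acyclic (i.e. {}_sH_•(C) = 0 for all 1 ≤ s ≤ N−1) if and only if {}_sH_•(C) = 0 for some 1 ≤ s ≤ N−1. -/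
/-! Write `E(s, t)` for the inclusion `ker d^s ⊆ im d^t` in every degree; for an `N`-complex this
is `ₛH_• = 0` when `s + t = N`. The pair `(s, t)` can be moved one step in either direction along
the line `s + t = N` as long as `s, t ≥ 1`. If `d^s x = 0` and `E(s + 1, t + 1)` holds, then
`x = d^(t+1) y`, and a second application to `d^t y` gives `d^t y = d^(t+1) z`, so `x = d^(t+2) z`.
If `d^(s+2) x = 0`, the same condition gives `d x = d^(t+1) y`; the correction `x - d^t y` is
killed by `d`, so it equals `d^(t+1) z`, and `x = d^t (y + d z)`. -/

section PowExact

variable {ι R V : Type*} [AddCommGroupWithOne ι] [Ring R] [AddCommGroup V] [Module R V]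

/-- Exactness of `d^t` followed by `d^s` at every degree of the family `gr`: homogeneous `s`-cycles
are images under `d^t`. For an `N`-complex and `s + t = N` this is the vanishing of `ₛH_•`. Only the
inclusion of cycles in boundaries is recorded; the reverse one is part of being an `N`-complex. -/
def IsPowExact (d : V →ₗ[R] V) (gr : ι → Submodule R V) (s t : ℕ) : Prop :=
  ∀ l : ι, LinearMap.ker (d ^ s) ⊓ gr l ≤ (gr (l + t)).map (d ^ t)

variable {d : V →ₗ[R] V} {gr : ι → Submodule R V} {s t : ℕ}

theorem IsPowExact.exists_pow_apply_eq (h : IsPowExact d gr s t) {l : ι} {x : V}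
    (hx : x ∈ gr l) (hsx : (d ^ s) x = 0) : ∃ y ∈ gr (l + t), (d ^ t) y = x :=
  h l ⟨hsx, hx⟩

theorem pow_apply_mem_of_mem_add (hdeg : ∀ m, ∀ x ∈ gr m, d x ∈ gr (m - 1)) (k : ℕ) {l : ι}
    {x : V} (hx : x ∈ gr (l + k)) : (d ^ k) x ∈ gr l := by
  induction k generalizing x with
  | zero => simpa using hx
  | succ k ih =>
    rw [pow_succ, Module.End.mul_apply]
    refine ih ?_
    simpa [← add_assoc] using hdeg _ x hx

theorem IsPowExact.transfer_one_right (hdeg : ∀ m, ∀ x ∈ gr m, d x ∈ gr (m - 1))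
    (h : IsPowExact d gr (s + 1) (t + 1)) : IsPowExact d gr s (t + 1 + 1) := by
  rintro l x ⟨hsx : (d ^ s) x = 0, hx⟩
  obtain ⟨y, hy, rfl⟩ := h.exists_pow_apply_eq hx (by
    rw [pow_succ', Module.End.mul_apply, hsx, map_zero])
  have hty_mem : (d ^ t) y ∈ gr (l + 1) :=
    pow_apply_mem_of_mem_add hdeg t (by convert hy using 2; push_cast; abel)
  have hty_cycle : (d ^ (s + 1)) ((d ^ t) y) = 0 := by
    rw [← hsx, ← Module.End.mul_apply, ← Module.End.mul_apply, ← pow_add, ← pow_add]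
    congr 2; omega
  obtain ⟨z, hz', hzy⟩ := h.exists_pow_apply_eq hty_mem hty_cycle
  have hz : z ∈ gr (l + (t + 1 + 1 : ℕ)) := by convert hz' using 2; push_cast; abel
  refine ⟨z, hz, ?_⟩
  calc (d ^ (t + 1 + 1)) z = d ((d ^ (t + 1)) z) := by rw [pow_succ', Module.End.mul_apply]
    _ = d ((d ^ t) y) := by rw [hzy]
    _ = (d ^ (t + 1)) y := by rw [pow_succ', Module.End.mul_apply]

theorem IsPowExact.transfer_one_left (hdeg : ∀ m, ∀ x ∈ gr m, d x ∈ gr (m - 1))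
    (h : IsPowExact d gr (s + 1) (t + 1)) : IsPowExact d gr (s + 1 + 1) t := by
  rintro l x ⟨hsx : (d ^ (s + 1 + 1)) x = 0, hx⟩
  obtain ⟨y, hy', hyx⟩ := h.exists_pow_apply_eq (hdeg l x hx) (by
    rwa [← Module.End.mul_apply, ← pow_succ])
  have hy : y ∈ gr (l + t) := by convert hy' using 2; push_cast; abel
  have hker : d (x - (d ^ t) y) = 0 := by
    rw [map_sub, ← hyx, pow_succ', Module.End.mul_apply, sub_self]
  obtain ⟨z, hz, hzx⟩ := h.exists_pow_apply_eq
    (sub_mem hx (pow_apply_mem_of_mem_add hdeg t hy))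
    (by rw [pow_succ, Module.End.mul_apply, hker, map_zero])
  have hdz : d z ∈ gr (l + t) := by simpa [← add_assoc] using hdeg _ z hz
  refine ⟨y + d z, add_mem hy hdz, ?_⟩
  calc (d ^ t) (y + d z) = (d ^ t) y + (d ^ (t + 1)) z := by
        rw [map_add, pow_succ, Module.End.mul_apply]
    _ = x := by rw [hzx, add_sub_cancel]

theorem IsPowExact.transfer_right (hdeg : ∀ m, ∀ x ∈ gr m, d x ∈ gr (m - 1)) (k : ℕ)
    (h : IsPowExact d gr (s + k) (t + 1)) : IsPowExact d gr s (t + 1 + k) := by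
  induction k generalizing t with
  | zero => exact h
  | succ k ih =>
    rw [← add_assoc, add_right_comm]
    exact ih (h.transfer_one_right hdeg)

theorem IsPowExact.transfer_left (hdeg : ∀ m, ∀ x ∈ gr m, d x ∈ gr (m - 1)) (k : ℕ)
    (h : IsPowExact d gr (s + 1) (t + k)) : IsPowExact d gr (s + 1 + k) t := by
  induction k generalizing s with
  | zero => exact h
  | succ k ih =>
    rw [← add_assoc, add_right_comm]
    exact ih (h.transfer_one_left hdeg)

theorem IsPowExact.of_add_eq_add (hdeg : ∀ m, ∀ x ∈ gr m, d x ∈ gr (m - 1))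
    (h : IsPowExact d gr s t) (hs : 1 ≤ s) (ht : 1 ≤ t) {s' t' : ℕ} (hsum : s + t = s' + t') :
    IsPowExact d gr s' t' := by
  rcases le_total s' s with hle | hle
  · obtain ⟨k, rfl⟩ := Nat.exists_eq_add_of_le hle
    obtain ⟨u, rfl⟩ := Nat.exists_eq_add_of_le' ht
    obtain rfl : t' = u + 1 + k := by omega
    exact h.transfer_right hdeg k
  · obtain ⟨k, rfl⟩ := Nat.exists_eq_add_of_le hle
    obtain ⟨u, rfl⟩ := Nat.exists_eq_add_of_le' hs
    obtain rfl : t = t' + k := by omega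
    exact h.transfer_left hdeg k

theorem stmt_4_general {N : ℕ} (hN : 2 ≤ N) (hdeg : ∀ m, ∀ x ∈ gr m, d x ∈ gr (m - 1)) :
    (∀ s : ℕ, 1 ≤ s → s ≤ N - 1 → IsPowExact d gr s (N - s)) ↔
      ∃ s : ℕ, 1 ≤ s ∧ s ≤ N - 1 ∧ IsPowExact d gr s (N - s) := by
  constructor
  · intro h
    exact ⟨1, le_rfl, by omega, h 1 le_rfl (by omega)⟩
  · rintro ⟨s, hs, hsN, h⟩ s' _ hsN'
    exact h.of_add_eq_add hdeg hs (by omega) (by omega)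

end PowExact

theorem stmt_4 (N : ℕ) (hN : 2 ≤ N) (R V : Type) [Ring R] [AddCommGroup V] [Module R V]
    (d : V →ₗ[R] V) (gr : ℤ → Submodule R V)
    (hgr : DirectSum.IsInternal gr) (hdeg : ∀ m : ℤ, ∀ x ∈ gr m, d x ∈ gr (m - 1))
    (hdN : d ^ N = 0) :
    (∀ s : ℕ, 1 ≤ s → s ≤ N - 1 → ∀ l : ℤ, cyc d gr s l ≤ bdry N d gr s l) ↔
      (∃ s : ℕ, 1 ≤ s ∧ s ≤ N - 1 ∧ ∀ l : ℤ, cyc d gr s l ≤ bdry N d gr s l) :=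
  stmt_4_general hN hdeg
end

section
/- Let N ≥ 3, R a ring, and C an N-complex of R-modules. For any integers r, s ≥ 1 with r + s ≤ N−1, the cyclic six-term sequence {}_sH_•(C) →((i_*)^r) {}_{s+r}H_•(C) →((d_*)^s) {}_rH_•(C) →((i_*)^{N−s−r}) {}_{N−s}H_•(C) →((d_*)^r) {}_{N−s−r}H_•(C) →((i_*)^s) {}_{N−r}H_•(C) →((d_*)^{N−r−s}) {}_sH_•(C) is exact. -/
/-! Write `H_a` for `ₐH` and `t = N - s - r`. The hexagon splits into three pairs of consecutive
exactness statements, one for each cyclic rotation `(a, b, c)` of `(s, r, t)`: exactness of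
`H_a → H_{a+b} → H_b` and of `H_{a+b} → H_b → H_{b+c}`. The boundaries of `H_b` are the elements
`d ^ a (d ^ c z)`. If `d ^ a x` is one of them, then `x` is the boundary `d ^ c z` of `H_{a+b}` plus
a cycle of `H_a`; if `x - d ^ a y` is one of them, then `x = d ^ a (d ^ c z + y)` is a boundary of
`H_{b+c}`. -/

theorem pow_apply_mem_of_degree_neg_one {R V : Type*} [Semiring R] [AddCommMonoid V] [Module R V]
    {d : V →ₗ[R] V} {gr : ℤ → Submodule R V} (hdeg : ∀ m : ℤ, ∀ x ∈ gr m, d x ∈ gr (m - 1))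
    {k : ℕ} {m : ℤ} {x : V} (hx : x ∈ gr (m + k)) : (d ^ k) x ∈ gr m := by
  induction k generalizing m with
  | zero => simpa using hx
  | succ k ih =>
    have hpow : (d ^ k) x ∈ gr (m + 1) := ih (by convert hx using 2; push_cast; ring)
    rw [pow_succ', Module.End.mul_apply]
    simpa using hdeg _ _ hpow

section

variable {R V : Type} [Ring R] [AddCommGroup V] [Module R V]
  {N : ℕ} {d : V →ₗ[R] V} {gr : ℤ → Submodule R V} {a b c : ℕ} {n : ℤ} {x : V}

theorem mem_cyc_iff : x ∈ cyc d gr a n ↔ (d ^ a) x = 0 ∧ x ∈ gr n :=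
  Iff.rfl

theorem mem_bdry_iff_of_add_eq (h : a + b = N) :
    x ∈ bdry N d gr a n ↔ ∃ z ∈ gr (n + b), (d ^ b) z = x := by
  obtain rfl : b = N - a := by omega
  exact Submodule.mem_map

theorem mem_bdry_sub_iff_of_add_eq (h : a + b + c = N) :
    x ∈ bdry N d gr b (n - a) ↔ ∃ z ∈ gr (n + c), (d ^ a) ((d ^ c) z) = x := by
  have hdegree : n - a + ((a + c : ℕ) : ℤ) = n + c := by push_cast; ring
  rw [mem_bdry_iff_of_add_eq (b := a + c) (by omega), hdegree]
  simp only [pow_add, Module.End.mul_apply]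

theorem pow_apply_mem_bdry_iff (hdeg : ∀ m : ℤ, ∀ x ∈ gr m, d x ∈ gr (m - 1))
    (h : a + b + c = N) (hx : x ∈ gr n) :
    (d ^ a) x ∈ bdry N d gr b (n - a) ↔
      ∃ y ∈ cyc d gr a n, x - y ∈ bdry N d gr (a + b) n := by
  simp only [mem_bdry_sub_iff_of_add_eq h, mem_bdry_iff_of_add_eq h, mem_cyc_iff]
  constructor
  · rintro ⟨z, hz, hzx⟩
    have hcycle : (d ^ a) (x - (d ^ c) z) = 0 := by rw [map_sub, hzx, sub_self]
    have hdegree : x - (d ^ c) z ∈ gr n :=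
      sub_mem hx (pow_apply_mem_of_degree_neg_one hdeg hz)
    exact ⟨x - (d ^ c) z, ⟨hcycle, hdegree⟩, z, hz, (sub_sub_cancel _ _).symm⟩
  · rintro ⟨y, ⟨hy, -⟩, z, hz, hzxy⟩
    exact ⟨z, hz, by rw [hzxy, map_sub, hy, sub_zero]⟩

theorem mem_bdry_add_iff (hdeg : ∀ m : ℤ, ∀ x ∈ gr m, d x ∈ gr (m - 1))
    (h : a + b + c = N) (hx : (d ^ b) x = 0) :
    x ∈ bdry N d gr (b + c) (n - a) ↔
      ∃ y ∈ cyc d gr (a + b) n, x - (d ^ a) y ∈ bdry N d gr b (n - a) := by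
  have hbdry : x ∈ bdry N d gr (b + c) (n - a) ↔ ∃ y ∈ gr n, (d ^ a) y = x := by
    rw [mem_bdry_iff_of_add_eq (b := a) (by omega), sub_add_cancel]
  simp only [hbdry, mem_cyc_iff]
  constructor
  · rintro ⟨y, hy, rfl⟩
    have hcycle : (d ^ (a + b)) y = 0 := by rwa [add_comm, pow_add, Module.End.mul_apply]
    exact ⟨y, ⟨hcycle, hy⟩, by rw [sub_self]; exact zero_mem _⟩
  · rintro ⟨y, ⟨-, hy⟩, hxy⟩
    obtain ⟨z, hz, hzxy⟩ := (mem_bdry_sub_iff_of_add_eq h).1 hxy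
    refine ⟨(d ^ c) z + y, add_mem (pow_apply_mem_of_degree_neg_one hdeg hz) hy, ?_⟩
    rw [map_add, hzxy, sub_add_cancel]

end

/-- For arbitrary `d` of degree `-1`, the sequence is that of the quotients
`ker d ^ s / (ker d ^ s ∩ im d ^ (N - s))`, which are the groups `ₛH` when `d ^ N = 0`. -/
theorem stmt_6_general (N : ℕ) (R V : Type) [Ring R] [AddCommGroup V] [Module R V]
    (d : V →ₗ[R] V) (gr : ℤ → Submodule R V)
    (hdeg : ∀ m : ℤ, ∀ x ∈ gr m, d x ∈ gr (m - 1))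
    (r s : ℕ) (hrs : r + s ≤ N) :
    (∀ n : ℤ, ∀ x ∈ cyc d gr (s + r) n,
      ((d ^ s) x ∈ bdry N d gr r (n - s) ↔
        ∃ y ∈ cyc d gr s n, x - y ∈ bdry N d gr (s + r) n)) ∧
    (∀ n : ℤ, ∀ x ∈ cyc d gr r (n - s),
      (x ∈ bdry N d gr (N - s) (n - s) ↔
        ∃ y ∈ cyc d gr (s + r) n, x - (d ^ s) y ∈ bdry N d gr r (n - s))) ∧
    (∀ n : ℤ, ∀ x ∈ cyc d gr (N - s) (n - s),
      ((d ^ r) x ∈ bdry N d gr (N - s - r) (n - s - r) ↔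
        ∃ y ∈ cyc d gr r (n - s), x - y ∈ bdry N d gr (N - s) (n - s))) ∧
    (∀ n : ℤ, ∀ x ∈ cyc d gr (N - s - r) (n - s - r),
      (x ∈ bdry N d gr (N - r) (n - s - r) ↔
        ∃ y ∈ cyc d gr (N - s) (n - s), x - (d ^ r) y ∈ bdry N d gr (N - s - r) (n - s - r))) ∧
    (∀ n : ℤ, ∀ x ∈ cyc d gr (N - r) (n - s - r),
      ((d ^ (N - r - s)) x ∈ bdry N d gr s (n - N) ↔
        ∃ y ∈ cyc d gr (N - s - r) (n - s - r), x - y ∈ bdry N d gr (N - r) (n - s - r))) ∧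
    (∀ n : ℤ, ∀ x ∈ cyc d gr s (n - N),
      (x ∈ bdry N d gr (s + r) (n - N) ↔
        ∃ y ∈ cyc d gr (N - r) (n - s - r),
          x - (d ^ (N - r - s)) y ∈ bdry N d gr s (n - N))) := by
  obtain ⟨t, ht⟩ : ∃ t, s + r + t = N := ⟨N - s - r, by omega⟩
  have hrts : r + t + s = N := by omega
  have htsr : t + s + r = N := by omega
  have hNs : N - s = r + t := by omega
  have hNr : N - r = t + s := by omega
  have hnN (n : ℤ) : n - N = n - s - r - t := by omega
  simp only [hNs, hNr, hnN, add_tsub_cancel_left, add_tsub_cancel_right]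
  exact ⟨fun n x hx => pow_apply_mem_bdry_iff hdeg ht (mem_cyc_iff.1 hx).2,
    fun n x hx => mem_bdry_add_iff hdeg ht (mem_cyc_iff.1 hx).1,
    fun n x hx => pow_apply_mem_bdry_iff hdeg hrts (mem_cyc_iff.1 hx).2,
    fun n x hx => mem_bdry_add_iff hdeg hrts (mem_cyc_iff.1 hx).1,
    fun n x hx => pow_apply_mem_bdry_iff hdeg htsr (mem_cyc_iff.1 hx).2,
    fun n x hx => mem_bdry_add_iff hdeg htsr (mem_cyc_iff.1 hx).1⟩

theorem stmt_6 (N : ℕ) (hN : 3 ≤ N) (R V : Type) [Ring R] [AddCommGroup V] [Module R V]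
    (d : V →ₗ[R] V) (gr : ℤ → Submodule R V)
    (hgr : DirectSum.IsInternal gr) (hdeg : ∀ m : ℤ, ∀ x ∈ gr m, d x ∈ gr (m - 1))
    (hdN : d ^ N = 0)
    (r s : ℕ) (hr : 1 ≤ r) (hs : 1 ≤ s) (hrs : r + s ≤ N - 1) :
    -- exactness at `ₛ₊ᵣH_n`:
    (∀ n : ℤ, ∀ x ∈ cyc d gr (s + r) n,
      ((d ^ s) x ∈ bdry N d gr r (n - s) ↔
        ∃ y ∈ cyc d gr s n, x - y ∈ bdry N d gr (s + r) n)) ∧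
    -- exactness at `ᵣH_{n-s}`:
    (∀ n : ℤ, ∀ x ∈ cyc d gr r (n - s),
      (x ∈ bdry N d gr (N - s) (n - s) ↔
        ∃ y ∈ cyc d gr (s + r) n, x - (d ^ s) y ∈ bdry N d gr r (n - s))) ∧
    -- exactness at `ₙ₋ₛH_{n-s}`:
    (∀ n : ℤ, ∀ x ∈ cyc d gr (N - s) (n - s),
      ((d ^ r) x ∈ bdry N d gr (N - s - r) (n - s - r) ↔
        ∃ y ∈ cyc d gr r (n - s), x - y ∈ bdry N d gr (N - s) (n - s))) ∧
    -- exactness at `ₙ₋ₛ₋ᵣH_{n-s-r}`: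
    (∀ n : ℤ, ∀ x ∈ cyc d gr (N - s - r) (n - s - r),
      (x ∈ bdry N d gr (N - r) (n - s - r) ↔
        ∃ y ∈ cyc d gr (N - s) (n - s), x - (d ^ r) y ∈ bdry N d gr (N - s - r) (n - s - r))) ∧
    -- exactness at `ₙ₋ᵣH_{n-s-r}`:
    (∀ n : ℤ, ∀ x ∈ cyc d gr (N - r) (n - s - r),
      ((d ^ (N - r - s)) x ∈ bdry N d gr s (n - N) ↔
        ∃ y ∈ cyc d gr (N - s - r) (n - s - r), x - y ∈ bdry N d gr (N - r) (n - s - r))) ∧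
    -- exactness at `ₛH_{n-N}`:
    (∀ n : ℤ, ∀ x ∈ cyc d gr s (n - N),
      (x ∈ bdry N d gr (s + r) (n - N) ↔
        ∃ y ∈ cyc d gr (N - r) (n - s - r),
          x - (d ^ (N - r - s)) y ∈ bdry N d gr s (n - N))) := by
  exact stmt_6_general N R V d gr hdeg r s (by omega)
end

section
/- Let R be a commutative ring with 1 ≠ 0 and let q ∈ R be a distinguished primitive Nth root of unity. For all integers 0 ≤ s ≤ t < m the identity q^{(s+1)t} Σ_{i=s}^{t} binom(m−1−i, m−1−t)_q · binom(i, s)_q · q^{−i(s+1)} = binom(m, m+s−t)_q holds in R. -/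
/-! Statement 9 (the key `q`-identity, Lemma 3.4): for a distinguished primitive `N`-th root of
unity `q` (necessarily a unit) and all `0 ≤ s ≤ t < m`:
`q^{(s+1)t} Σ_{i=s}^{t} binom(m-1-i, m-1-t)_q binom(i,s)_q q^{-i(s+1)} = binom(m, m+s-t)_q`. -/

section
variable {R : Type} [CommRing R]

/-- `[n]_q = 1 + q + ⋯ + q^{n-1}`. -/
def qNum (q : R) (n : ℕ) : R := ∑ k ∈ Finset.range n, q ^ k

/-- The `q`-factorial `[n]_q!`. -/
def qFact (q : R) : ℕ → R
  | 0 => 1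
  | n + 1 => qFact q n * qNum q (n + 1)

/-- The `q`-binomial coefficients, defined by `binom(n,0)_q = 1`, `binom(0,m+1)_q = 0` and the
recurrence `binom(n+1,m+1)_q = binom(n,m)_q + q^{m+1} binom(n,m+1)_q`; in particular
`binom(n,n)_q = 1` and `binom(n,m)_q = 0` for `m > n`. -/
def qBinom (q : R) : ℕ → ℕ → R
  | _, 0 => 1
  | 0, _ + 1 => 0
  | n + 1, m + 1 => qBinom q n m + q ^ (m + 1) * qBinom q n (m + 1)

/-- `q` is a distinguished primitive `N`-th root of unity: `[N]_q = 0` and `[m]_q` is invertible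
for `1 ≤ m ≤ N-1`. -/
def IsDistinguishedRoot (N : ℕ) (q : R) : Prop :=
  qNum q N = 0 ∧ ∀ m : ℕ, 1 ≤ m → m ≤ N - 1 → IsUnit (qNum q m)

end

/-! Absorb `q ^ ((s + 1) * t)` into the sum and put `m = t + a + 1`, `t = i + k`. The identity
becomes `∑_{i + k = t} q^{(s+1)k} binom(i, s)_q binom(a+k, a)_q = binom(t+a+1, a+s+1)_q`.
As functions of `(t, a)`, both sides satisfy `F(t+1, a+1) = F(t+1, a) + q^{a+s+2} F(t, a+1)` by the
Pascal recurrence, so they agree by induction; the case `a = 0` is the `q`-hockey-stick identity. -/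

section qBinom

open Finset.HasAntidiagonal (antidiagonal)

variable {R : Type} [CommRing R] (q : R)

theorem qBinom_zero_right (n : ℕ) : qBinom q n 0 = 1 := by
  cases n <;> rfl

theorem qBinom_succ_succ (n m : ℕ) :
    qBinom q (n + 1) (m + 1) = qBinom q n m + q ^ (m + 1) * qBinom q n (m + 1) := rfl

theorem qBinom_eq_zero_of_lt {n m : ℕ} (h : n < m) : qBinom q n m = 0 := by
  induction n generalizing m with
  | zero => obtain ⟨m, rfl⟩ := Nat.exists_eq_succ_of_ne_zero h.ne'; rfl
  | succ n ih =>
    obtain ⟨m, rfl⟩ := Nat.exists_eq_add_of_lt h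
    rw [qBinom_succ_succ, ih (by omega), ih (by omega), mul_zero, add_zero]

theorem qBinom_self (n : ℕ) : qBinom q n n = 1 := by
  induction n with
  | zero => rfl
  | succ n ih =>
    rw [qBinom_succ_succ, ih, qBinom_eq_zero_of_lt q n.lt_succ_self, mul_zero, add_zero]

theorem qBinom_self_add (n s : ℕ) : qBinom q n (n + s) = qBinom q 0 s := by
  cases s with
  | zero => rw [add_zero, qBinom_self, qBinom_self]
  | succ s => rw [qBinom_eq_zero_of_lt q (by omega), qBinom_eq_zero_of_lt q s.succ_pos]

theorem sum_antidiagonal_pow_mul_qBinom (s t : ℕ) :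
    ∑ p ∈ antidiagonal t, q ^ ((s + 1) * p.2) * qBinom q p.1 s
      = qBinom q (t + 1) (s + 1) := by
  induction t with
  | zero => simpa [add_comm] using (qBinom_self_add q 1 s).symm
  | succ t ih =>
    rw [Finset.Nat.sum_antidiagonal_succ', qBinom_succ_succ q (t + 1), ← ih, Finset.mul_sum]
    simp only [mul_zero, pow_zero, one_mul, mul_add_one, pow_add, mul_assoc, mul_left_comm]

theorem sum_antidiagonal_pow_mul_qBinom_mul_qBinom_succ_succ (s t a : ℕ) :
    ∑ p ∈ antidiagonal (t + 1),
        q ^ ((s + 1) * p.2) * qBinom q p.1 s * qBinom q (a + 1 + p.2) (a + 1)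
      = ∑ p ∈ antidiagonal (t + 1),
          q ^ ((s + 1) * p.2) * qBinom q p.1 s * qBinom q (a + p.2) a
        + q ^ (a + s + 2) * ∑ p ∈ antidiagonal t,
          q ^ ((s + 1) * p.2) * qBinom q p.1 s * qBinom q (a + 1 + p.2) (a + 1) := by
  have pascal (k : ℕ) : qBinom q (a + 1 + (k + 1)) (a + 1)
      = qBinom q (a + (k + 1)) a + q ^ (a + 1) * qBinom q (a + 1 + k) (a + 1) := by
    rw [add_right_comm a 1 (k + 1), qBinom_succ_succ, add_right_comm a 1 k, add_assoc a k 1]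
  simp only [Finset.Nat.sum_antidiagonal_succ', pascal, add_zero, qBinom_self]
  rw [add_assoc, Finset.mul_sum, ← Finset.sum_add_distrib]
  congr 1
  exact Finset.sum_congr rfl fun p _ => by ring

theorem sum_antidiagonal_pow_mul_qBinom_mul_qBinom (s t a : ℕ) :
    ∑ p ∈ antidiagonal t, q ^ ((s + 1) * p.2) * qBinom q p.1 s * qBinom q (a + p.2) a
      = qBinom q (t + a + 1) (a + s + 1) := by
  induction a generalizing t with
  | zero =>
    simpa only [qBinom_zero_right, mul_one, add_zero, zero_add]
      using sum_antidiagonal_pow_mul_qBinom q s t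
  | succ a ih_a =>
    induction t with
    | zero => simpa [qBinom_self, add_right_comm] using (qBinom_self_add q (a + 2) s).symm
    | succ t ih_t =>
      rw [sum_antidiagonal_pow_mul_qBinom_mul_qBinom_succ_succ, ih_a, ih_t,
        show t + 1 + a + 1 = t + (a + 1) + 1 by ring, show a + 1 + s + 1 = a + s + 1 + 1 by ring,
        ← qBinom_succ_succ, add_right_comm t 1 (a + 1)]

theorem sum_Icc_pow_mul_qBinom_mul_qBinom (s t a : ℕ) :
    ∑ i ∈ Finset.Icc s t, q ^ ((s + 1) * (t - i)) * qBinom q i s * qBinom q (a + (t - i)) a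
      = qBinom q (t + a + 1) (a + s + 1) := by
  rw [← sum_antidiagonal_pow_mul_qBinom_mul_qBinom,
    Finset.Nat.sum_antidiagonal_eq_sum_range_succ_mk]
  refine Finset.sum_subset (fun i hi => ?_) fun i hi_range hi_Icc => ?_
  · exact Finset.mem_range_succ_iff.2 (Finset.mem_Icc.1 hi).2
  · have hi_lt : i < s := by
      rw [Finset.mem_range] at hi_range
      rw [Finset.mem_Icc] at hi_Icc
      omega
    rw [qBinom_eq_zero_of_lt q hi_lt, mul_zero, zero_mul]

end qBinom

theorem pow_mul_zpow_neg_mul {G : Type*} [Group G] (g : G) (n : ℕ) {i t : ℕ} (hit : i ≤ t) :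
    g ^ (n * t) * g ^ (-(i * n : ℤ)) = g ^ (n * (t - i)) := by
  rw [Nat.mul_sub, pow_sub g (Nat.mul_le_mul_left n hit), zpow_neg, mul_comm n i]
  norm_cast

theorem stmt_9_general (R : Type) [CommRing R] (q : Rˣ) (s t m : ℕ) (htm : t < m) :
    ((q ^ ((s + 1) * t : ℕ) : Rˣ) : R) *
      ∑ i ∈ Finset.Icc s t,
        qBinom (q : R) (m - 1 - i) (m - 1 - t) * qBinom (q : R) i s *
          ((q ^ (-(i * (s + 1) : ℤ)) : Rˣ) : R)
      = qBinom (q : R) m (m + s - t) := by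
  obtain ⟨a, rfl⟩ := Nat.exists_eq_add_of_lt htm
  rw [show t + a + 1 + s - t = a + s + 1 by omega, ← sum_Icc_pow_mul_qBinom_mul_qBinom,
    Finset.mul_sum]
  refine Finset.sum_congr rfl fun i hi => ?_
  have hit : i ≤ t := (Finset.mem_Icc.1 hi).2
  have hpow : ((q ^ ((s + 1) * t) : Rˣ) : R) * ((q ^ (-(i * (s + 1) : ℤ)) : Rˣ) : R)
      = (q : R) ^ ((s + 1) * (t - i)) := by
    exact_mod_cast congrArg Units.val (pow_mul_zpow_neg_mul q (s + 1) hit)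
  rw [show t + a + 1 - 1 - i = a + (t - i) by omega, show t + a + 1 - 1 - t = a by omega, ← hpow]
  ring

theorem stmt_9 (N : ℕ) (hN : 2 ≤ N) (R : Type) [CommRing R] (hR : (1 : R) ≠ 0)
    (q : Rˣ) (hq : IsDistinguishedRoot N (q : R))
    (s t m : ℕ) (hst : s ≤ t) (htm : t < m) :
    ((q ^ ((s + 1) * t : ℕ) : Rˣ) : R) *
      ∑ i ∈ Finset.Icc s t,
        qBinom (q : R) (m - 1 - i) (m - 1 - t) * qBinom (q : R) i s *
          ((q ^ (-(i * (s + 1) : ℤ)) : Rˣ) : R)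
      = qBinom (q : R) m (m + s - t) := by
  exact stmt_9_general R q s t m htm
end

section
/- Let R be a commutative ring with a distinguished primitive Nth root of unity q, and let h be a homotopy between two morphisms of N-complexes f, g : C → C'. Then for any N-complex D, the map h⊗D : C⊗D → C'⊗D given by x⊗y ↦ h(x)⊗y is a homotopy between f⊗D and g⊗D. Similarly, D⊗f and D⊗g : D⊗C → D⊗C' are homotopic via the map x⊗y ↦ q^{−a} x⊗h(y) for homogeneous elements x ∈ D_a and y ∈ C. -/
/-! Statement 10 (Proposition 3.6): tensoring with an `N`-complex preserves homotopies.
Complexes are encoded as modules with an internal `ℤ`-grading and a degree `-1` differential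
with `d ^ N = 0`.  The differential of `C ⊗ D` is `d(x ⊗ y) = dx ⊗ y + q^{-a} x ⊗ dy` for
`x ∈ C_a`; the grading operator `x ↦ q^{-a} x` on `C` is encoded by a linear map `μ` with
`μ x = q^{-a} • x` for `x ∈ C_a` (such `μ` exists and is unique by internality of the grading).
If `h` is a homotopy from `f` to `g` (so `f - g = Σ_{i<N} d'^{N-1-i} ∘ h ∘ d^i`), then
`h ⊗ D : x ⊗ y ↦ h x ⊗ y` is a homotopy from `f ⊗ D` to `g ⊗ D`, and
`x ⊗ y ↦ q^{-a} x ⊗ h y` (i.e. `μ_D ⊗ h`) is a homotopy from `D ⊗ f` to `D ⊗ g`. -/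

open scoped TensorProduct

/-!
Writing `S_n(d', h, d) = Σ_{i<n} d' ^ (n-1-i) ∘ h ∘ d ^ i`, the sum `S_n(d', h, d)` is the
off-diagonal entry of the `n`-th power of the triangular endomorphism `(x, y) ↦ (d x, h x + d' y)`.
If `b * a = q • (a * b)`, then `(a + b) ^ N = a ^ N + b ^ N`, because the intermediate Gaussian
binomial coefficients vanish at a primitive `N`-th root of unity. Both tensor differentials are sums
of two such `q`-commuting endomorphisms, and so are the triangular endomorphisms built from them.
Comparing off-diagonal entries of `N`-th powers, only the summand that contains `h` contributes:
it gives `S_N(d', h, d) ⊗ id` in the first case and `μ ^ N ⊗ S_N(d', h, d)` with `μ ^ N = 1` in the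
second.
-/

section GaussianBinomial

open Finset.HasAntidiagonal (antidiagonal)

variable {R : Type*} [CommSemiring R]

/-- A distinguished primitive `N`-th root of unity: the `q`-number `[N]_q` vanishes and `[m]_q` is
invertible for `0 < m < N`, where `[m]_q` is the geometric sum `1 + q + ⋯ + q ^ (m - 1)`. Unlike for
`IsPrimitiveRoot`, invertibility is demanded because `R` need not be a field. -/
structure IsDistinguishedPrimitiveRoot (q : R) (N : ℕ) : Prop where
  geom_sum_eq_zero : ∑ i ∈ Finset.range N, q ^ i = 0
  isUnit_geom_sum : ∀ m, m ≠ 0 → m < N → IsUnit (∑ i ∈ Finset.range m, q ^ i)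

/-- The Gaussian binomial coefficient, defined by the `q`-Pascal rule. -/
def gaussianBinomial (q : R) : ℕ → ℕ → R
  | _, 0 => 1
  | 0, _ + 1 => 0
  | n + 1, k + 1 => gaussianBinomial q n k + q ^ (k + 1) * gaussianBinomial q n (k + 1)

@[simp]
theorem gaussianBinomial_zero_right (q : R) (n : ℕ) : gaussianBinomial q n 0 = 1 := by
  simp [gaussianBinomial]

theorem gaussianBinomial_succ_succ (q : R) (n k : ℕ) :
    gaussianBinomial q (n + 1) (k + 1) =
      gaussianBinomial q n k + q ^ (k + 1) * gaussianBinomial q n (k + 1) := by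
  rw [gaussianBinomial]

theorem gaussianBinomial_eq_zero_of_lt (q : R) {n k : ℕ} (hnk : n < k) :
    gaussianBinomial q n k = 0 := by
  induction n generalizing k with
  | zero =>
    obtain ⟨k, rfl⟩ := Nat.exists_eq_succ_of_ne_zero hnk.ne'
    rw [gaussianBinomial]
  | succ n ih =>
    obtain ⟨k, rfl⟩ := Nat.exists_eq_succ_of_ne_zero (Nat.ne_zero_of_lt hnk)
    rw [gaussianBinomial_succ_succ, ih (by omega), ih (by omega), mul_zero, add_zero]

@[simp]
theorem gaussianBinomial_self (q : R) (n : ℕ) : gaussianBinomial q n n = 1 := by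
  induction n with
  | zero => exact gaussianBinomial_zero_right q 0
  | succ n ih =>
    rw [gaussianBinomial_succ_succ, ih, gaussianBinomial_eq_zero_of_lt q n.lt_succ_self, mul_zero,
      add_zero]

theorem geom_sum_mul_gaussianBinomial_succ_succ (q : R) (n k : ℕ) :
    (∑ i ∈ Finset.range (k + 1), q ^ i) * gaussianBinomial q (n + 1) (k + 1) =
      (∑ i ∈ Finset.range (n + 1), q ^ i) * gaussianBinomial q n k := by
  induction n generalizing k with
  | zero =>
    rcases k with _ | k
    · simp
    · rw [gaussianBinomial_eq_zero_of_lt q (by omega), gaussianBinomial_eq_zero_of_lt q (by omega),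
        mul_zero, mul_zero]
  | succ n ih =>
    rcases k with _ | k
    · have ih₀ : gaussianBinomial q (n + 1) 1 = ∑ i ∈ Finset.range (n + 1), q ^ i := by
        simpa using ih 0
      rw [gaussianBinomial_succ_succ, ih₀, geom_sum_succ (n := n + 1)]
      simp [add_comm]
    · set binom := gaussianBinomial q (n + 1) (k + 1) with binom_def
      calc (∑ i ∈ Finset.range (k + 2), q ^ i) * gaussianBinomial q (n + 2) (k + 2)
          = (∑ i ∈ Finset.range (k + 2), q ^ i) * binom + q ^ (k + 2) *
              ((∑ i ∈ Finset.range (k + 2), q ^ i) * gaussianBinomial q (n + 1) (k + 2)) := by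
            rw [gaussianBinomial_succ_succ]; ring
        _ = binom + q * ((∑ i ∈ Finset.range (k + 1), q ^ i) * binom) + q ^ (k + 2) *
              ((∑ i ∈ Finset.range (n + 1), q ^ i) * gaussianBinomial q n (k + 1)) := by
            rw [ih, geom_sum_succ (n := k + 1)]; ring
        _ = binom + q * (∑ i ∈ Finset.range (n + 1), q ^ i) *
              (gaussianBinomial q n k + q ^ (k + 1) * gaussianBinomial q n (k + 1)) := by
            rw [ih]; ring
        _ = (∑ i ∈ Finset.range (n + 2), q ^ i) * binom := by
            rw [← gaussianBinomial_succ_succ, ← binom_def, geom_sum_succ (n := n + 1)]; ring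

theorem IsDistinguishedPrimitiveRoot.gaussianBinomial_eq_zero {q : R} {N k : ℕ}
    (hq : IsDistinguishedPrimitiveRoot q N) (hk : k ≠ 0) (hkN : k < N) :
    gaussianBinomial q N k = 0 := by
  have isUnit_k := hq.isUnit_geom_sum k hk hkN
  obtain ⟨k, rfl⟩ := Nat.exists_eq_succ_of_ne_zero hk
  obtain ⟨n, rfl⟩ := Nat.exists_eq_succ_of_ne_zero (Nat.ne_zero_of_lt hkN)
  have absorption := geom_sum_mul_gaussianBinomial_succ_succ q n k
  rwa [hq.geom_sum_eq_zero, zero_mul, isUnit_k.mul_right_eq_zero] at absorption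

theorem IsDistinguishedPrimitiveRoot.pow_eq_one {q : R} {N : ℕ}
    (hq : IsDistinguishedPrimitiveRoot q N) : q ^ N = 1 := by
  have two_expansions := (geom_sum_succ' (x := q) (n := N)).symm.trans geom_sum_succ
  simpa [hq.geom_sum_eq_zero] using two_expansions

variable {S : Type*} [Semiring S] [Algebra R S] {q : R} {a b : S}

theorem add_pow_of_q_commute (hba : b * a = q • (a * b)) (n : ℕ) :
    (a + b) ^ n = ∑ ij ∈ antidiagonal n,
      gaussianBinomial q n ij.1 • (a ^ ij.1 * b ^ ij.2) := by
  have b_mul_pow (k : ℕ) : b * a ^ k = q ^ k • (a ^ k * b) := by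
    have semiconj : SemiconjBy b a (q • a) := by rw [SemiconjBy, hba, smul_mul_assoc]
    rw [(semiconj.pow_right k).eq, smul_pow, smul_mul_assoc]
  induction n with
  | zero => simp
  | succ n ih =>
    have a_mul_sum : a * (a + b) ^ n = ∑ ij ∈ antidiagonal n,
        gaussianBinomial q n ij.1 • (a ^ (ij.1 + 1) * b ^ ij.2) := by
      simp only [ih, Finset.mul_sum, mul_smul_comm, pow_succ', mul_assoc]
    have b_mul_sum : b * (a + b) ^ n = ∑ ij ∈ antidiagonal n,
        (q ^ ij.1 * gaussianBinomial q n ij.1) • (a ^ ij.1 * b ^ (ij.2 + 1)) := by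
      simp only [ih, Finset.mul_sum, mul_smul_comm, ← mul_assoc, b_mul_pow, smul_mul_assoc,
        smul_smul, pow_succ', mul_comm (q ^ _)]
    have shift := (Finset.Nat.sum_antidiagonal_succ' (n := n) (f := fun ij ↦
      (q ^ ij.1 * gaussianBinomial q n ij.1) • (a ^ ij.1 * b ^ ij.2))).symm.trans
        Finset.Nat.sum_antidiagonal_succ
    simp only [gaussianBinomial_eq_zero_of_lt q n.lt_succ_self, mul_zero, zero_smul, zero_add,
      pow_zero, one_mul, one_smul, gaussianBinomial_zero_right] at shift
    rw [pow_succ', add_mul, a_mul_sum, b_mul_sum, shift, Finset.Nat.sum_antidiagonal_succ]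
    simp only [gaussianBinomial_succ_succ, gaussianBinomial_zero_right, add_smul,
      Finset.sum_add_distrib, pow_zero, one_mul, one_smul]
    abel

theorem IsDistinguishedPrimitiveRoot.add_pow_eq_pow_add_pow {N : ℕ}
    (hq : IsDistinguishedPrimitiveRoot q N) (hN : N ≠ 0) (hba : b * a = q • (a * b)) :
    (a + b) ^ N = a ^ N + b ^ N := by
  rw [add_pow_of_q_commute hba, Finset.Nat.sum_antidiagonal_eq_sum_range_succ_mk,
    Finset.sum_range_succ]
  obtain ⟨n, rfl⟩ := Nat.exists_eq_succ_of_ne_zero hN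
  rw [Finset.sum_range_succ', Finset.sum_eq_zero fun k hk ↦ ?_]
  · simp [add_comm]
  · have hkn := Finset.mem_range.1 hk
    rw [hq.gaussianBinomial_eq_zero k.succ_ne_zero (by omega), zero_smul]

end GaussianBinomial

section NullHomotopicMap

variable {R M M' : Type*} [CommSemiring R] [AddCommMonoid M] [Module R M]
  [AddCommMonoid M'] [Module R M']

/-- The map `Σ_{i<n} d' ^ (n-1-i) ∘ h ∘ d ^ i`; a homotopy `h` between morphisms `f` and `g` of
`N`-complexes is one for which `f - g` equals this map with `n = N`. -/
def nullHomotopicMap (d' : Module.End R M') (h : M →ₗ[R] M') (d : Module.End R M) (n : ℕ) :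
    M →ₗ[R] M' :=
  ∑ i ∈ Finset.range n, (d' ^ (n - 1 - i)) ∘ₗ h ∘ₗ (d ^ i)

@[simp]
theorem nullHomotopicMap_zero_right (d' : Module.End R M') (h : M →ₗ[R] M') (d : Module.End R M) :
    nullHomotopicMap d' h d 0 = 0 := by
  simp [nullHomotopicMap]

theorem nullHomotopicMap_succ (d' : Module.End R M') (h : M →ₗ[R] M') (d : Module.End R M)
    (n : ℕ) :
    nullHomotopicMap d' h d (n + 1) = d' ∘ₗ nullHomotopicMap d' h d n + h ∘ₗ (d ^ n) := by
  have pow_sub (i : ℕ) (hi : i ∈ Finset.range n) : d' ^ (n - i) = d' ∘ₗ d' ^ (n - 1 - i) := by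
    have hin := Finset.mem_range.1 hi
    rw [← Module.End.iterate_succ', show n - i = n - 1 - i + 1 by omega]
  ext x
  simp only [nullHomotopicMap, Finset.sum_range_succ, LinearMap.add_apply, LinearMap.sum_apply,
    LinearMap.comp_apply, map_sum, add_tsub_cancel_right, tsub_self, pow_zero, Module.End.one_apply]
  congr 1
  refine Finset.sum_congr rfl fun i hi ↦ ?_
  exact LinearMap.congr_fun (pow_sub i hi) _

@[simp]
theorem nullHomotopicMap_zero_middle (d' : Module.End R M') (d : Module.End R M) (n : ℕ) :
    nullHomotopicMap d' 0 d n = 0 := by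
  simp [nullHomotopicMap]

/-- The endomorphism `(x, y) ↦ (d x, h x + d' y)` of `M × M'`, which plays the role of the
differential of a mapping cone. -/
def coneEnd (d' : Module.End R M') (h : M →ₗ[R] M') (d : Module.End R M) :
    Module.End R (M × M') :=
  (d ∘ₗ LinearMap.fst R M M').prod (h.coprod d')

@[simp]
theorem coneEnd_apply (d' : Module.End R M') (h : M →ₗ[R] M') (d : Module.End R M) (z : M × M') :
    coneEnd d' h d z = (d z.1, h z.1 + d' z.2) :=
  rfl

theorem coneEnd_inj {d' e' : Module.End R M'} {h k : M →ₗ[R] M'} {d e : Module.End R M} :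
    coneEnd d' h d = coneEnd e' k e ↔ d' = e' ∧ h = k ∧ d = e := by
  constructor
  · intro eq
    have apply_eq (x : M) (y : M') := LinearMap.congr_fun eq (x, y)
    simp only [coneEnd_apply, Prod.mk.injEq] at apply_eq
    refine ⟨?_, ?_, ?_⟩ <;> ext z
    · simpa using (apply_eq 0 z).2
    · simpa using (apply_eq z 0).2
    · exact (apply_eq z 0).1
  · rintro ⟨rfl, rfl, rfl⟩
    rfl

theorem coneEnd_add (d' e' : Module.End R M') (h k : M →ₗ[R] M') (d e : Module.End R M) :
    coneEnd d' h d + coneEnd e' k e = coneEnd (d' + e') (h + k) (d + e) := by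
  ext <;> simp

theorem smul_coneEnd (c : R) (d' : Module.End R M') (h : M →ₗ[R] M') (d : Module.End R M) :
    c • coneEnd d' h d = coneEnd (c • d') (c • h) (c • d) := by
  ext <;> simp

theorem coneEnd_mul (d' e' : Module.End R M') (h k : M →ₗ[R] M') (d e : Module.End R M) :
    coneEnd d' h d * coneEnd e' k e = coneEnd (d' * e') (h ∘ₗ e + d' ∘ₗ k) (d * e) := by
  ext <;> simp

theorem coneEnd_pow (d' : Module.End R M') (h : M →ₗ[R] M') (d : Module.End R M) (n : ℕ) :
    coneEnd d' h d ^ n = coneEnd (d' ^ n) (nullHomotopicMap d' h d n) (d ^ n) := by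
  induction n with
  | zero => ext <;> simp
  | succ n ih =>
    rw [pow_succ', ih, coneEnd_mul, nullHomotopicMap_succ, add_comm, pow_succ', pow_succ']

theorem IsDistinguishedPrimitiveRoot.nullHomotopicMap_add {q : R} {N : ℕ}
    (hq : IsDistinguishedPrimitiveRoot q N) {a' b' : Module.End R M'} {h k : M →ₗ[R] M'}
    {a b : Module.End R M} (hba' : b' * a' = q • (a' * b'))
    (hmid : k ∘ₗ a + b' ∘ₗ h = q • (h ∘ₗ b + a' ∘ₗ k)) (hba : b * a = q • (a * b)) :
    nullHomotopicMap (a' + b') (h + k) (a + b) N =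
      nullHomotopicMap a' h a N + nullHomotopicMap b' k b N := by
  rcases eq_or_ne N 0 with rfl | hN
  · simp
  have cone_q_commute : coneEnd b' k b * coneEnd a' h a =
      q • (coneEnd a' h a * coneEnd b' k b) := by
    rw [coneEnd_mul, coneEnd_mul, smul_coneEnd, hba', hmid, hba]
  have cone_pow := hq.add_pow_eq_pow_add_pow hN cone_q_commute
  simp only [coneEnd_add, coneEnd_pow] at cone_pow
  exact (coneEnd_inj.1 cone_pow).2.1

end NullHomotopicMap

section TensorDifferential

open TensorProduct (map)

variable {R M M' P : Type*} [CommSemiring R] [AddCommMonoid M] [Module R M]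
  [AddCommMonoid M'] [Module R M'] [AddCommMonoid P] [Module R P]

/-- The differential of a tensor product, `x ⊗ y ↦ d x ⊗ y + q^{-a} x ⊗ e y` for `x` of degree `a`,
where `μ` stands for the operator `x ↦ q^{-a} x`. -/
def tensorDifferential (d μ : Module.End R M) (e : Module.End R P) : Module.End R (M ⊗[R] P) :=
  map d LinearMap.id + map μ e

theorem nullHomotopicMap_map_right (d' : Module.End R M') (h : M →ₗ[R] M') (d : Module.End R M)
    (e : Module.End R P) (n : ℕ) :
    nullHomotopicMap (map d' e) (map h e) (map d e) n =
      map (nullHomotopicMap d' h d n) (e ^ n) := by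
  induction n with
  | zero => simp
  | succ n ih =>
    rw [nullHomotopicMap_succ, nullHomotopicMap_succ, ih, TensorProduct.map_pow,
      TensorProduct.map_add_left, ← TensorProduct.map_comp, ← TensorProduct.map_comp,
      Module.End.iterate_succ']

theorem nullHomotopicMap_map_left (e : Module.End R P) (d' : Module.End R M') (h : M →ₗ[R] M')
    (d : Module.End R M) (n : ℕ) :
    nullHomotopicMap (map e d') (map e h) (map e d) n =
      map (e ^ n) (nullHomotopicMap d' h d n) := by
  induction n with
  | zero => simp
  | succ n ih =>
    rw [nullHomotopicMap_succ, nullHomotopicMap_succ, ih, TensorProduct.map_pow,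
      TensorProduct.map_add_right, ← TensorProduct.map_comp, ← TensorProduct.map_comp,
      Module.End.iterate_succ']

variable {q : R} {N : ℕ}

theorem map_mul_map_id_of_q_commute {μ d : Module.End R M} (hμd : μ ∘ₗ d = q • (d ∘ₗ μ))
    (e : Module.End R P) :
    map μ e * map d LinearMap.id = q • (map d LinearMap.id * map μ e) := by
  rw [Module.End.mul_eq_comp, Module.End.mul_eq_comp, ← TensorProduct.map_comp,
    ← TensorProduct.map_comp, hμd, TensorProduct.map_smul_left, LinearMap.id_comp,
    LinearMap.comp_id]

theorem IsDistinguishedPrimitiveRoot.nullHomotopicMap_tensorDifferential_left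
    (hq : IsDistinguishedPrimitiveRoot q N) {d' μ' : Module.End R M'} {h : M →ₗ[R] M'}
    {d μ : Module.End R M} (hμd' : μ' ∘ₗ d' = q • (d' ∘ₗ μ')) (hμh : μ' ∘ₗ h = q • (h ∘ₗ μ))
    (hμd : μ ∘ₗ d = q • (d ∘ₗ μ)) (e : Module.End R P) :
    nullHomotopicMap (tensorDifferential d' μ' e) (map h LinearMap.id)
      (tensorDifferential d μ e) N = map (nullHomotopicMap d' h d N) LinearMap.id := by
  have middle : 0 ∘ₗ map d LinearMap.id + map μ' e ∘ₗ map h LinearMap.id =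
      q • (map h LinearMap.id ∘ₗ map μ e + map d' LinearMap.id ∘ₗ 0) := by
    rw [LinearMap.zero_comp, LinearMap.comp_zero, zero_add, add_zero, ← TensorProduct.map_comp,
      ← TensorProduct.map_comp, hμh, TensorProduct.map_smul_left, LinearMap.id_comp,
      LinearMap.comp_id]
  have additivity := hq.nullHomotopicMap_add (map_mul_map_id_of_q_commute hμd' e) middle
    (map_mul_map_id_of_q_commute hμd e)
  rwa [nullHomotopicMap_zero_middle, add_zero, add_zero, nullHomotopicMap_map_right,
    Module.End.id_pow] at additivity

theorem IsDistinguishedPrimitiveRoot.nullHomotopicMap_tensorDifferential_right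
    (hq : IsDistinguishedPrimitiveRoot q N) {e μ : Module.End R P}
    (hμe : μ ∘ₗ e = q • (e ∘ₗ μ)) (d' : Module.End R M') (h : M →ₗ[R] M') (d : Module.End R M) :
    nullHomotopicMap (tensorDifferential e μ d') (map μ h) (tensorDifferential e μ d) N =
      map (μ ^ N) (nullHomotopicMap d' h d N) := by
  have middle : map μ h ∘ₗ map e LinearMap.id + map μ d' ∘ₗ 0 =
      q • (0 ∘ₗ map μ d + map e LinearMap.id ∘ₗ map μ h) := by
    rw [LinearMap.zero_comp, LinearMap.comp_zero, zero_add, add_zero, ← TensorProduct.map_comp,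
      ← TensorProduct.map_comp, hμe, TensorProduct.map_smul_left, LinearMap.id_comp,
      LinearMap.comp_id]
  have additivity := hq.nullHomotopicMap_add (map_mul_map_id_of_q_commute hμe d') middle
    (map_mul_map_id_of_q_commute hμe d)
  rwa [nullHomotopicMap_zero_middle, zero_add, zero_add, nullHomotopicMap_map_left] at additivity

end TensorDifferential

section Grading

variable {R V V' : Type*} [CommSemiring R] [AddCommMonoid V] [Module R V]
  [AddCommMonoid V'] [Module R V'] {gr : ℤ → Submodule R V} {gr' : ℤ → Submodule R V'}
  {q : Rˣ} {μ : Module.End R V} {μ' : Module.End R V'}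

/-- `μ` is the operator `x ↦ q^{-a} x` for `x` of degree `a`, which carries the powers of `q` in the
differential of a tensor product. -/
def IsGradingTwist (q : Rˣ) (gr : ℤ → Submodule R V) (μ : Module.End R V) : Prop :=
  ∀ a : ℤ, ∀ x ∈ gr a, μ x = ((q ^ (-a) : Rˣ) : R) • x

theorem linearMap_ext_of_isInternal {ι : Type*} [DecidableEq ι] {A : ι → Submodule R V}
    (hA : DirectSum.IsInternal A) {φ ψ : V →ₗ[R] V'} (hφψ : ∀ i, ∀ x ∈ A i, φ x = ψ x) :
    φ = ψ := by
  rw [← LinearMap.eqLocus_eq_top, ← top_le_iff, ← hA.submodule_iSup_eq_top]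
  exact iSup_le hφψ

theorem IsGradingTwist.comp_eq_smul_comp (hμ' : IsGradingTwist q gr' μ')
    (hμ : IsGradingTwist q gr μ) (hgr : DirectSum.IsInternal gr) {φ : V →ₗ[R] V'} {k : ℤ}
    (hφ : ∀ m, ∀ x ∈ gr m, φ x ∈ gr' (m + k)) :
    μ' ∘ₗ φ = ((q ^ (-k) : Rˣ) : R) • (φ ∘ₗ μ) := by
  refine linearMap_ext_of_isInternal hgr fun m x hx ↦ ?_
  rw [LinearMap.comp_apply, hμ' _ _ (hφ m x hx), LinearMap.smul_apply, LinearMap.comp_apply,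
    hμ m x hx, map_smul, smul_smul, ← Units.val_mul, ← zpow_add, neg_add_rev]

theorem IsGradingTwist.comp_differential (hμ : IsGradingTwist q gr μ)
    (hgr : DirectSum.IsInternal gr) {d : Module.End R V}
    (hd : ∀ m, ∀ x ∈ gr m, d x ∈ gr (m - 1)) : μ ∘ₗ d = (q : R) • (d ∘ₗ μ) := by
  simpa using hμ.comp_eq_smul_comp hμ hgr (k := -1) hd

theorem IsGradingTwist.comp_homotopy (hμ' : IsGradingTwist q gr' μ')
    (hμ : IsGradingTwist q gr μ) (hgr : DirectSum.IsInternal gr) {N : ℕ} (hqN : q ^ N = 1)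
    {h : V →ₗ[R] V'} (hh : ∀ m, ∀ x ∈ gr m, h x ∈ gr' (m + N - 1)) :
    μ' ∘ₗ h = (q : R) • (h ∘ₗ μ) := by
  have q_zpow : q ^ (-((N : ℤ) - 1)) = q := by
    rw [neg_sub, zpow_sub, zpow_one, zpow_natCast, hqN, inv_one, mul_one]
  have twisted := hμ'.comp_eq_smul_comp hμ hgr (φ := h) (k := N - 1)
    fun m x hx ↦ add_sub_assoc m (N : ℤ) 1 ▸ hh m x hx
  rwa [q_zpow] at twisted

theorem IsGradingTwist.pow (hμ : IsGradingTwist q gr μ) (n : ℕ) :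
    IsGradingTwist (q ^ n) gr (μ ^ n) := by
  intro a x hx
  induction n with
  | zero => simp
  | succ n ih =>
    rw [pow_succ', Module.End.mul_apply, ih, map_smul, hμ a x hx, smul_smul, ← Units.val_mul,
      ← mul_zpow, pow_succ]

theorem IsGradingTwist.pow_eq_id (hμ : IsGradingTwist q gr μ) (hgr : DirectSum.IsInternal gr)
    {n : ℕ} (hqn : q ^ n = 1) : μ ^ n = LinearMap.id := by
  refine linearMap_ext_of_isInternal hgr fun a x hx ↦ ?_
  rw [hμ.pow n a x hx, hqn, one_zpow, Units.val_one, one_smul, LinearMap.id_apply]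

end Grading

theorem stmt_10_general {R V V' U : Type*} [CommRing R] [AddCommGroup V] [Module R V]
    [AddCommGroup V'] [Module R V'] [AddCommGroup U] [Module R U] {N : ℕ} {q : Rˣ}
    (hq : IsDistinguishedPrimitiveRoot (q : R) N)
    {dC : Module.End R V} {grC : ℤ → Submodule R V} (hgrC : DirectSum.IsInternal grC)
    (hdegC : ∀ m : ℤ, ∀ x ∈ grC m, dC x ∈ grC (m - 1))
    {dC' : Module.End R V'} {grC' : ℤ → Submodule R V'} (hgrC' : DirectSum.IsInternal grC')
    (hdegC' : ∀ m : ℤ, ∀ x ∈ grC' m, dC' x ∈ grC' (m - 1))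
    {dU : Module.End R U} {grU : ℤ → Submodule R U} (hgrU : DirectSum.IsInternal grU)
    (hdegU : ∀ m : ℤ, ∀ x ∈ grU m, dU x ∈ grU (m - 1))
    {μC : Module.End R V} (hμC : IsGradingTwist q grC μC)
    {μC' : Module.End R V'} (hμC' : IsGradingTwist q grC' μC')
    {μU : Module.End R U} (hμU : IsGradingTwist q grU μU)
    {f g h : V →ₗ[R] V'} (hhdeg : ∀ m : ℤ, ∀ x ∈ grC m, h x ∈ grC' (m + N - 1))
    (hhom : f - g = nullHomotopicMap dC' h dC N) :
    TensorProduct.map f (LinearMap.id : U →ₗ[R] U) - TensorProduct.map g LinearMap.id =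
        nullHomotopicMap (tensorDifferential dC' μC' dU) (TensorProduct.map h LinearMap.id)
          (tensorDifferential dC μC dU) N ∧
      TensorProduct.map (LinearMap.id : U →ₗ[R] U) f - TensorProduct.map LinearMap.id g =
        nullHomotopicMap (tensorDifferential dU μU dC') (TensorProduct.map μU h)
          (tensorDifferential dU μU dC) N := by
  have hqN : q ^ N = 1 := Units.ext hq.pow_eq_one
  constructor
  · rw [hq.nullHomotopicMap_tensorDifferential_left (hμC'.comp_differential hgrC' hdegC')
      (hμC'.comp_homotopy hμC hgrC hqN hhdeg) (hμC.comp_differential hgrC hdegC), ← hhom]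
    exact (LinearMap.rTensor_sub f g).symm
  · rw [hq.nullHomotopicMap_tensorDifferential_right (hμU.comp_differential hgrU hdegU),
      hμU.pow_eq_id hgrU hqN, ← hhom]
    exact (LinearMap.lTensor_sub f g).symm

theorem stmt_10 (N : ℕ) (hN : 2 ≤ N) (R : Type) [CommRing R] (hR : (1 : R) ≠ 0)
    -- a distinguished primitive `N`-th root of unity (necessarily a unit):
    (q : Rˣ)
    (hq0 : ∑ i ∈ Finset.range N, (q : R) ^ i = 0)
    (hqu : ∀ m : ℕ, 1 ≤ m → m ≤ N - 1 → IsUnit (∑ i ∈ Finset.range m, (q : R) ^ i))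
    (V V' U : Type) [AddCommGroup V] [Module R V] [AddCommGroup V'] [Module R V']
    [AddCommGroup U] [Module R U]
    -- the `N`-complex `C`:
    (dC : V →ₗ[R] V) (grC : ℤ → Submodule R V)
    (hgrC : DirectSum.IsInternal grC) (hdegC : ∀ m : ℤ, ∀ x ∈ grC m, dC x ∈ grC (m - 1))
    (hdNC : dC ^ N = 0)
    -- the `N`-complex `C'`:
    (dC' : V' →ₗ[R] V') (grC' : ℤ → Submodule R V')
    (hgrC' : DirectSum.IsInternal grC') (hdegC' : ∀ m : ℤ, ∀ x ∈ grC' m, dC' x ∈ grC' (m - 1))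
    (hdNC' : dC' ^ N = 0)
    -- the `N`-complex `D`:
    (dU : U →ₗ[R] U) (grU : ℤ → Submodule R U)
    (hgrU : DirectSum.IsInternal grU) (hdegU : ∀ m : ℤ, ∀ x ∈ grU m, dU x ∈ grU (m - 1))
    (hdNU : dU ^ N = 0)
    -- the grading operators `x ↦ q^{-a} x`:
    (μC : V →ₗ[R] V) (hμC : ∀ a : ℤ, ∀ x ∈ grC a, μC x = ((q ^ (-a) : Rˣ) : R) • x)
    (μC' : V' →ₗ[R] V') (hμC' : ∀ a : ℤ, ∀ x ∈ grC' a, μC' x = ((q ^ (-a) : Rˣ) : R) • x)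
    (μU : U →ₗ[R] U) (hμU : ∀ a : ℤ, ∀ x ∈ grU a, μU x = ((q ^ (-a) : Rˣ) : R) • x)
    -- morphisms `f, g : C → C'`:
    (f g : V →ₗ[R] V')
    (hfd : dC' ∘ₗ f = f ∘ₗ dC) (hgd : dC' ∘ₗ g = g ∘ₗ dC)
    (hfdeg : ∀ m : ℤ, ∀ x ∈ grC m, f x ∈ grC' m) (hgdeg : ∀ m : ℤ, ∀ x ∈ grC m, g x ∈ grC' m)
    -- a homotopy `h` from `f` to `g`:
    (h : V →ₗ[R] V') (hhdeg : ∀ m : ℤ, ∀ x ∈ grC m, h x ∈ grC' (m + N - 1))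
    (hhom : f - g = ∑ i ∈ Finset.range N, (dC' ^ (N - 1 - i)) ∘ₗ h ∘ₗ (dC ^ i)) :
    -- `h ⊗ D` is a homotopy from `f ⊗ D` to `g ⊗ D`:
    (TensorProduct.map f (LinearMap.id : U →ₗ[R] U) - TensorProduct.map g LinearMap.id =
      ∑ i ∈ Finset.range N,
        ((TensorProduct.map dC' LinearMap.id + TensorProduct.map μC' dU) ^ (N - 1 - i)) ∘ₗ
          (TensorProduct.map h (LinearMap.id : U →ₗ[R] U)) ∘ₗ
          ((TensorProduct.map dC LinearMap.id + TensorProduct.map μC dU) ^ i)) ∧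
    -- `μ_D ⊗ h` is a homotopy from `D ⊗ f` to `D ⊗ g`:
    (TensorProduct.map (LinearMap.id : U →ₗ[R] U) f - TensorProduct.map LinearMap.id g =
      ∑ i ∈ Finset.range N,
        ((TensorProduct.map dU LinearMap.id + TensorProduct.map μU dC') ^ (N - 1 - i)) ∘ₗ
          (TensorProduct.map μU h) ∘ₗ
          ((TensorProduct.map dU LinearMap.id + TensorProduct.map μU dC) ^ i)) := by
  exact stmt_10_general ⟨hq0, fun m hm hmN ↦ hqu m (by omega) (by omega)⟩ hgrC hdegC hgrC' hdegC'
    hgrU hdegU hμC hμC' hμU hhdeg hhom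
end
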